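/- arXiv:1006.5285 — 5 statements merged into one kernel-verified Lean document; each statement's English description precedes it below -/
import Mathlib

section
/- Let K be a compact Hausdorff abelian topological group, G a subgroup of K, and N a closed subgroup of K such that the quotient group K/N is NSS. Then G is locally essential in K if and only if G ∩ N is locally essential in N. -/
/-- A subgroup `H` of a topological abelian group `G` is *locally essential* if there is a
neighborhood `V` of `0` such that every closed subgroup `N ⊆ V` with `H ⊓ N = ⊥` is
trivial. (In an abelian group all subgroups are normal.) -/
def LocallyEssential {G : Type*} [AddCommGroup G] [TopologicalSpace G]
    (H : AddSubgroup G) : Prop :=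
  ∃ V ∈ nhds (0 : G), ∀ N : AddSubgroup G, IsClosed (N : Set G) →
    (N : Set G) ⊆ V → H ⊓ N = ⊥ → N = ⊥

/-- A topological abelian group is *NSS* (has no small subgroups) if some neighborhood
of `0` contains no nontrivial subgroup. -/
def IsNSS (G : Type*) [AddCommGroup G] [TopologicalSpace G] : Prop :=
  ∃ V ∈ nhds (0 : G), ∀ N : AddSubgroup G, (N : Set G) ⊆ V → N = ⊥

/-!
Since `K ⧸ N` is NSS, every sufficiently small subgroup of `K` has trivial image in `K ⧸ N`, that
is, lies in `N`. Hence `K` and the closed subgroup `N` have the same small closed subgroups, and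
such a subgroup meets `G` exactly where it meets `G ∩ N`.
-/

open Topology

theorem addSubgroup_map_comap_inf {L K : Type*} [AddGroup L] [AddGroup K] (f : L →+ K)
    (G : AddSubgroup K) (M : AddSubgroup L) : (G.comap f ⊓ M).map f = G ⊓ M.map f :=
  SetLike.coe_injective (Set.image_preimage_inter f M G)

section

variable {K L : Type*} [AddCommGroup K] [TopologicalSpace K] [AddCommGroup L] [TopologicalSpace L]

theorem IsNSS.exists_nhds_forall_le_ker (hL : IsNSS L) {f : K →+ L} (hf : Continuous f) :
    ∃ U ∈ 𝓝 (0 : K), ∀ M : AddSubgroup K, (M : Set K) ⊆ U → M ≤ f.ker := by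
  obtain ⟨V, hV, eq_bot_of_subset⟩ := hL
  have preimage_mem : f ⁻¹' V ∈ 𝓝 0 := hf.continuousAt.preimage_mem_nhds (by rwa [map_zero])
  refine ⟨f ⁻¹' V, preimage_mem, fun M hMV ↦ ?_⟩
  exact (M.map_eq_bot_iff).1 (eq_bot_of_subset (M.map f) (Set.image_subset_iff.2 hMV))

theorem LocallyEssential.comap {G : AddSubgroup K} (hG : LocallyEssential G) {f : L →+ K}
    (hf : IsClosedEmbedding f) : LocallyEssential (G.comap f) := by
  obtain ⟨V, hV, eq_bot_of_subset⟩ := hG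
  have preimage_mem : f ⁻¹' V ∈ 𝓝 0 :=
    hf.continuous.continuousAt.preimage_mem_nhds (by rwa [map_zero])
  refine ⟨f ⁻¹' V, preimage_mem, fun M hM hMV hGM ↦ ?_⟩
  have inf_map_eq_bot : G ⊓ M.map f = ⊥ := by
    rw [← addSubgroup_map_comap_inf, hGM, AddSubgroup.map_bot]
  have map_eq_bot : M.map f = ⊥ :=
    eq_bot_of_subset (M.map f) (hf.isClosedMap M hM) (Set.image_subset_iff.2 hMV) inf_map_eq_bot
  exact (M.map_eq_bot_iff_of_injective hf.injective).1 map_eq_bot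

theorem LocallyEssential.of_comap {G : AddSubgroup K} {f : L →+ K}
    (hG : LocallyEssential (G.comap f)) (hf : IsEmbedding f)
    (hrange : ∃ U ∈ 𝓝 (0 : K), ∀ M : AddSubgroup K, (M : Set K) ⊆ U → M ≤ f.range) :
    LocallyEssential G := by
  obtain ⟨W, hW, eq_bot_of_subset⟩ := hG
  obtain ⟨U, hU, le_range_of_subset⟩ := hrange
  obtain ⟨V, hV, hVW⟩ : ∃ V ∈ 𝓝 (0 : K), f ⁻¹' V ⊆ W := by
    rwa [hf.isInducing.nhds_eq_comap, map_zero] at hW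
  refine ⟨U ∩ V, Filter.inter_mem hU hV, fun M hM hMUV hGM ↦ ?_⟩
  obtain ⟨hMU, hMV⟩ := Set.subset_inter_iff.1 hMUV
  have comap_inf_eq_bot : G.comap f ⊓ M.comap f = ⊥ := by
    rw [← AddSubgroup.comap_inf, hGM, AddMonoidHom.comap_bot, f.ker_eq_bot hf.injective]
  have comap_eq_bot : M.comap f = ⊥ :=
    eq_bot_of_subset (M.comap f) (hM.preimage hf.continuous)
      ((Set.preimage_mono hMV).trans hVW) comap_inf_eq_bot
  rw [← AddSubgroup.map_comap_eq_self (le_range_of_subset M hMU), comap_eq_bot,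
    AddSubgroup.map_bot]

theorem locallyEssential_iff_inter_locallyEssential_general (G N : AddSubgroup K)
    (hN : IsClosed (N : Set K)) (hNSS : IsNSS (K ⧸ N)) :
    LocallyEssential G ↔ LocallyEssential (G.addSubgroupOf N) := by
  have small_le_range : ∃ U ∈ 𝓝 (0 : K), ∀ M : AddSubgroup K,
      (M : Set K) ⊆ U → M ≤ N.subtype.range := by
    simpa only [QuotientAddGroup.ker_mk', AddSubgroup.range_subtype] using
      hNSS.exists_nhds_forall_le_ker (f := QuotientAddGroup.mk' N) QuotientAddGroup.continuous_mk
  exact ⟨fun hG ↦ hG.comap (f := N.subtype) hN.isClosedEmbedding_subtypeVal,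
    fun hGN ↦ hGN.of_comap (f := N.subtype) .subtypeVal small_le_range⟩

end

/-- Let `K` be a compact Hausdorff abelian topological group, `G` a subgroup of `K`, and
`N` a closed subgroup such that `K/N` is NSS. Then `G` is locally essential in `K` iff
`G ∩ N` is locally essential in `N`. -/
theorem locallyEssential_iff_inter_locallyEssential {K : Type*} [AddCommGroup K]
    [TopologicalSpace K] [IsTopologicalAddGroup K] [T2Space K] [CompactSpace K]
    (G N : AddSubgroup K) (hN : IsClosed (N : Set K)) (hNSS : IsNSS (K ⧸ N)) :
    LocallyEssential G ↔ LocallyEssential (G.addSubgroupOf N) :=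
  locallyEssential_iff_inter_locallyEssential_general G N hN hNSS
end

section
/- Let K be a compact Hausdorff abelian topological group and let G be a dense subgroup of K whose subspace topology is linear, i.e. G has a neighborhood basis at 0 consisting of open subgroups. Then G is locally minimal if and only if G has an open subgroup which is minimal. -/
/-- A Hausdorff topological abelian group `(G, τ)` is *locally minimal* if there exists a
neighborhood `V` of `0` such that the only Hausdorff group topology `σ` coarser than `τ`
for which `V` is still a `σ`-neighborhood of `0` is `τ` itself. -/
def LocallyMinimal (G : Type*) [AddGroup G] [τ : TopologicalSpace G] : Prop :=
  ∃ V ∈ nhds (0 : G), ∀ σ : TopologicalSpace G, τ ≤ σ →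
    @IsTopologicalAddGroup G σ _ → @T2Space G σ → V ∈ @nhds G σ 0 → σ = τ

/-- A Hausdorff topological abelian group `(G, τ)` is *minimal* if there is no Hausdorff
group topology on `G` strictly coarser than `τ`. -/
def IsMinimal (G : Type*) [AddGroup G] [τ : TopologicalSpace G] : Prop :=
  ∀ σ : TopologicalSpace G, τ ≤ σ →
    @IsTopologicalAddGroup G σ _ → @T2Space G σ → σ = τ

/-!
A group topology on a subgroup `W` of an abelian group `A` extends to a group topology on `A` in
which `W` is open: declare the neighborhoods of `0` in `W` to be a basis of neighborhoods of `0`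
in `A`. Conversely, a group topology on `A` in which `W` is open is determined by its restriction
to `W`. Hence an open subgroup `W` is minimal exactly when `W` witnesses the local minimality
of `A`, and when the topology of `A` is linear, every witness `V` can be shrunk to an open subgroup.
-/

open Filter Topology

section PushforwardTopology

variable {A B : Type*} [AddCommGroup A] [AddGroup B] [TopologicalSpace B] [IsTopologicalAddGroup B]

/-- The images under a homomorphism `f : B →+ A` of the neighborhoods of `0`, as a basis of
neighborhoods of `0` for a group topology on `A`. This is the finest group topology on `A` for which
`f` is continuous; for `f` the inclusion of a subgroup, it is the extension of the topology of
the subgroup that makes the subgroup open. -/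
@[reducible]
def nhdsImageBasis (f : B →+ A) : AddGroupFilterBasis A :=
  addGroupFilterBasisOfComm ((f '' ·) '' (𝓝 (0 : B)).sets)
    ⟨_, Set.univ, univ_mem, rfl⟩
    (by
      rintro _ _ ⟨U, hU, rfl⟩ ⟨V, hV, rfl⟩
      exact ⟨_, ⟨U ∩ V, inter_mem hU hV, rfl⟩, Set.image_inter_subset f U V⟩)
    (by
      rintro _ ⟨U, hU, rfl⟩
      exact ⟨0, mem_of_mem_nhds hU, map_zero f⟩)
    (by
      rintro _ ⟨U, hU, rfl⟩
      obtain ⟨V, hV, hVU⟩ := exists_nhds_zero_half hU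
      refine ⟨_, ⟨V, hV, rfl⟩, ?_⟩
      rintro _ ⟨_, ⟨a, ha, rfl⟩, _, ⟨b, hb, rfl⟩, rfl⟩
      exact ⟨a + b, hVU a ha b hb, map_add f a b⟩)
    (by
      rintro _ ⟨U, hU, rfl⟩
      refine ⟨_, ⟨-U, neg_mem_nhds_zero B hU, rfl⟩, ?_⟩
      rintro _ ⟨b, hb, rfl⟩
      exact ⟨-b, hb, map_neg f b⟩)

theorem nhds_zero_nhdsImageBasis (f : B →+ A) :
    @nhds A (nhdsImageBasis f).topology 0 = map f (𝓝 0) := by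
  ext S
  rw [(nhdsImageBasis f).nhds_zero_hasBasis.mem_iff, mem_map_iff_exists_image]
  exact Set.exists_mem_image

theorem t2Space_nhdsImageBasis [T1Space B] {f : B →+ A} (hf : Function.Injective f) :
    @T2Space A (nhdsImageBasis f).topology := by
  let := (nhdsImageBasis f).topology
  refine IsTopologicalAddGroup.t2Space_of_zero_sep fun x hx ↦ ⟨{x}ᶜ, ?_, fun h ↦ h rfl⟩
  have hfiber : IsClosed (f ⁻¹' {x}) := (Set.subsingleton_singleton.preimage hf).isClosed
  rw [nhds_zero_nhdsImageBasis]
  exact hfiber.isOpen_compl.mem_nhds fun h : f 0 = x ↦ hx (h.symm.trans (map_zero f))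

theorem induced_nhdsImageBasis {f : B →+ A} (hf : Function.Injective f) :
    (nhdsImageBasis f).topology.induced f = ‹TopologicalSpace B› := by
  let := (nhdsImageBasis f).topology
  refine IsTopologicalAddGroup.ext (topologicalAddGroup_induced f) ‹_› ?_
  rw [nhds_induced, map_zero, nhds_zero_nhdsImageBasis, comap_map hf]

end PushforwardTopology

section GroupTopologies

variable {A : Type*} [AddGroup A]

theorem map_subtypeVal_nhds_zero [TopologicalSpace A] {W : AddSubgroup A}
    (hW : IsOpen (W : Set A)) : map ((↑) : W → A) (𝓝 0) = 𝓝 0 :=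
  hW.isOpenEmbedding_subtypeVal.map_nhds_eq 0

variable {σ τ : TopologicalSpace A}

theorem topology_le_of_nhds_zero_le (hσ : @IsTopologicalAddGroup A σ _)
    (hτ : @IsTopologicalAddGroup A τ _) (h : @nhds A σ 0 ≤ @nhds A τ 0) : σ ≤ τ :=
  le_of_nhds_le_nhds fun x ↦ by
    rw [← @map_add_left_nhds_zero A σ _ _ x, ← @map_add_left_nhds_zero A τ _ _ x]
    exact map_mono h

theorem topology_eq_of_induced_openSubgroup_eq (hσ : @IsTopologicalAddGroup A σ _)
    (hτ : @IsTopologicalAddGroup A τ _) {W : AddSubgroup A} (hWσ : IsOpen[σ] (W : Set A))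
    (hWτ : IsOpen[τ] (W : Set A))
    (h : σ.induced ((↑) : W → A) = τ.induced ((↑) : W → A)) : σ = τ := by
  refine IsTopologicalAddGroup.ext hσ hτ ?_
  rw [← @map_subtypeVal_nhds_zero A _ σ W hWσ, ← @map_subtypeVal_nhds_zero A _ τ W hWτ]
  exact congrArg (fun t ↦ map ((↑) : W → A) (@nhds W t 0)) h

end GroupTopologies

/-- Minimality of the topology `τ` among the Hausdorff group topologies for which `V` is a
neighborhood of `0`. A group is locally minimal when this holds for some neighborhood `V` of `0`. -/
def IsMinimalRelativeTo {A : Type*} [AddGroup A] [τ : TopologicalSpace A] (V : Set A) : Prop :=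
  ∀ σ : TopologicalSpace A, τ ≤ σ → @IsTopologicalAddGroup A σ _ → @T2Space A σ →
    V ∈ @nhds A σ 0 → σ = τ

theorem IsMinimalRelativeTo.mono {A : Type*} [AddGroup A] [TopologicalSpace A] {U V : Set A}
    (hV : IsMinimalRelativeTo V) (hUV : U ⊆ V) : IsMinimalRelativeTo U :=
  fun σ hle hσ hT2 hU ↦ hV σ hle hσ hT2 (mem_of_superset hU hUV)

theorem IsMinimalRelativeTo.of_isMinimal_openSubgroup {A : Type*} [AddGroup A]
    [τ : TopologicalSpace A] [hτ : IsTopologicalAddGroup A] {W : AddSubgroup A}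
    (hW : IsOpen (W : Set A)) (hmin : IsMinimal W) : IsMinimalRelativeTo (W : Set A) := by
  intro σ hle hσ hT2 hWσ
  have hWσ_open : IsOpen[σ] (W : Set A) := @AddSubgroup.isOpen_of_mem_nhds A _ σ _ W 0 hWσ
  have hinduced : σ.induced ((↑) : W → A) = τ.induced ((↑) : W → A) :=
    hmin _ (induced_mono hle) (@AddSubgroup.instIsTopologicalAddGroupSubtypeMem A σ _ _ W)
      (@instT2SpaceSubtype A σ _ hT2)
  exact topology_eq_of_induced_openSubgroup_eq hσ hτ hWσ_open hW hinduced

theorem IsMinimalRelativeTo.isMinimal_openSubgroup {A : Type*} [AddCommGroup A]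
    [τ : TopologicalSpace A] [hτ : IsTopologicalAddGroup A] {W : AddSubgroup A}
    (hmin : IsMinimalRelativeTo (W : Set A)) (hW : IsOpen (W : Set A)) : IsMinimal W := by
  intro σ hle hσ hT2
  let ρ : TopologicalSpace A := (nhdsImageBasis W.subtype).topology
  have hρ : @IsTopologicalAddGroup A ρ _ := (nhdsImageBasis W.subtype).isTopologicalAddGroup
  have hnhds : @nhds A ρ 0 = map W.subtype (@nhds W σ 0) := nhds_zero_nhdsImageBasis W.subtype
  have hτρ : τ ≤ ρ := by
    refine topology_le_of_nhds_zero_le hτ hρ ?_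
    rw [hnhds, ← @map_subtypeVal_nhds_zero A _ τ W hW]
    exact map_mono (nhds_mono hle)
  have hWρ : (W : Set A) ∈ @nhds A ρ 0 := by
    rw [hnhds]
    exact univ_mem' (f := @nhds W σ 0) Subtype.property
  have hρτ : ρ = τ := hmin ρ hτρ hρ (t2Space_nhdsImageBasis W.subtype_injective) hWρ
  calc σ = ρ.induced W.subtype := (induced_nhdsImageBasis W.subtype_injective).symm
    _ = τ.induced W.subtype := by rw [hρτ]

theorem linear_denseSubgroup_locallyMinimal_iff_general {A : Type*} [AddCommGroup A]
    [TopologicalSpace A] [NonarchimedeanAddGroup A] :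
    LocallyMinimal A ↔ ∃ W : AddSubgroup A, IsOpen (W : Set A) ∧ IsMinimal W := by
  constructor
  · rintro ⟨V, hV, hVmin : IsMinimalRelativeTo V⟩
    obtain ⟨W, hWV⟩ := NonarchimedeanAddGroup.is_nonarchimedean V hV
    exact ⟨W, W.isOpen, (hVmin.mono hWV).isMinimal_openSubgroup W.isOpen⟩
  · rintro ⟨W, hW, hWmin⟩
    exact ⟨W, hW.mem_nhds W.zero_mem, IsMinimalRelativeTo.of_isMinimal_openSubgroup hW hWmin⟩

/-- Let `K` be a compact Hausdorff abelian group and `G` a dense subgroup whose subspace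
topology is linear (it has a neighborhood basis at `0` of open subgroups). Then `G` is
locally minimal iff `G` has an open minimal subgroup. -/
theorem linear_denseSubgroup_locallyMinimal_iff {K : Type*} [AddCommGroup K]
    [TopologicalSpace K] [IsTopologicalAddGroup K] [T2Space K] [CompactSpace K]
    (G : AddSubgroup K) (hG : Dense (G : Set K))
    (hlin : ∀ V ∈ nhds (0 : ↥G), ∃ W : AddSubgroup ↥G,
      IsOpen (W : Set ↥G) ∧ (W : Set ↥G) ⊆ V) :
    LocallyMinimal ↥G ↔
      ∃ W : AddSubgroup ↥G, IsOpen (W : Set ↥G) ∧ IsMinimal ↥W := by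
  have : NonarchimedeanAddGroup G := ⟨fun V hV ↦
    let ⟨W, hW, hWV⟩ := hlin V hV; ⟨⟨W, hW⟩, hWV⟩⟩
  exact linear_denseSubgroup_locallyMinimal_iff_general
end

section
/- Let K be a compact Hausdorff abelian topological group and G a dense subgroup of K. If there exists an infinite totally disconnected closed subgroup N of K with G ∩ N = {0}, then G (with the subspace topology) is not locally minimal. -/
/-!
Inside the profinite group `N` there are nontrivial closed subgroups `M` as close to `0` as we
like. Since `G` meets `M` trivially, it embeds algebraically into `K ⧸ M`, and the topology it
inherits from there is a coarser Hausdorff group topology. It still has a prescribed neighborhood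
of `0` as a neighborhood once `M` is small enough, but by density of `G` it cannot separate `0`
from the nonzero points of `M`, hence it is strictly coarser.
-/

open Topology Pointwise

section CosetTopology

variable {K : Type*} [AddGroup K] [TopologicalSpace K]

/-- The topology induced on a subgroup `G` of `K` by the map `G → K ⧸ M`: the competitor to the
subspace topology in the definition of local minimality. The subgroup `M` need not be normal, so
`K ⧸ M` is only the space of left cosets. -/
abbrev cosetTopology (G M : AddSubgroup K) : TopologicalSpace G :=
  .induced (fun g => ((g : K) : K ⧸ M)) inferInstance

namespace cosetTopology

theorem subspace_le (G M : AddSubgroup K) : instTopologicalSpaceSubtype ≤ cosetTopology G M :=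
  (QuotientAddGroup.continuous_mk.comp continuous_subtype_val).le_induced

variable [IsTopologicalAddGroup K] {G M : AddSubgroup K}

theorem isTopologicalAddGroup [M.Normal] : @IsTopologicalAddGroup G (cosetTopology G M) _ :=
  topologicalAddGroup_induced ((QuotientAddGroup.mk' M).comp G.subtype)

theorem t2Space [M.Normal] (hM : IsClosed (M : Set K)) (hGM : Disjoint G M) :
    @T2Space G (cosetTopology G M) := by
  have coset_injective : Function.Injective fun g : G => ((g : K) : K ⧸ M) := fun g h hgh =>
    neg_add_eq_zero.1 <| Subtype.ext <|
      AddSubgroup.disjoint_def.1 hGM (-g + h).2 (QuotientAddGroup.eq.1 hgh)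
  let _ := cosetTopology G M
  exact .of_injective_continuous coset_injective continuous_induced_dom

theorem mem_nhds_zero_iff {s : Set G} :
    s ∈ @nhds G (cosetTopology G M) 0 ↔
      ∃ W ∈ 𝓝 (0 : K), ((↑) : G → K) ⁻¹' (W + (M : Set K)) ⊆ s := by
  rw [cosetTopology, nhds_induced, AddSubgroup.coe_zero, QuotientAddGroup.nhds_eq,
    ((𝓝 (0 : K)).basis_sets.map _ |>.comap _).mem_iff]
  simp only [id, ← QuotientAddGroup.preimage_image_mk_eq_add, Set.preimage_preimage]

theorem eq_bot_of_eq_subspace [T2Space K] (hG : Dense (G : Set K))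
    (h : cosetTopology G M = instTopologicalSpaceSubtype) : M = ⊥ := by
  refine (AddSubgroup.eq_bot_iff_forall M).2 fun m hm => by_contra fun hm0 => ?_
  obtain ⟨C, ⟨hC0, hC⟩, hCm⟩ :=
    (closed_nhds_basis (0 : K)).mem_iff.1 (isOpen_compl_singleton.mem_nhds (Ne.symm hm0))
  have preimage_mem : ((↑) : G → K) ⁻¹' C ∈ @nhds G (cosetTopology G M) 0 := by
    rw [h]
    exact continuous_subtype_val.continuousAt.preimage_mem_nhds hC0
  obtain ⟨W, hW, hWC⟩ := mem_nhds_zero_iff.1 preimage_mem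
  have saturation_subset : interior W + (M : Set K) ⊆ C := calc
    interior W + (M : Set K) ⊆ closure ((interior W + (M : Set K)) ∩ G) :=
      hG.open_subset_closure_inter isOpen_interior.add_right
    _ ⊆ C := closure_minimal
      (fun x hx => hWC (a := ⟨x, hx.2⟩) (Set.add_subset_add_right interior_subset hx.1)) hC
  exact hCm (saturation_subset ⟨0, mem_interior_iff_mem_nhds.2 hW, m, hm, zero_add m⟩) rfl

end cosetTopology

theorem not_locallyMinimal_of_forall_nhds_exists_subset [IsTopologicalAddGroup K] [T2Space K]
    {G : AddSubgroup K} (hG : Dense (G : Set K))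
    (hsmall : ∀ U ∈ 𝓝 (0 : K), ∃ M : AddSubgroup K,
      M.Normal ∧ IsClosed (M : Set K) ∧ M ≠ ⊥ ∧ Disjoint G M ∧ (M : Set K) ⊆ U) :
    ¬ LocallyMinimal G := by
  rintro ⟨V, hV, hmin⟩
  obtain ⟨U, hU, hUV⟩ := (mem_nhds_subtype _ _ _).1 hV
  obtain ⟨W, hWo, hW0, hWU⟩ := exists_open_nhds_zero_add_subset hU
  have hW : W ∈ 𝓝 0 := hWo.mem_nhds hW0
  obtain ⟨M, hMnormal, hMclosed, hMne, hGM, hMW⟩ := hsmall W hW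
  have hV' : V ∈ @nhds G (cosetTopology G M) 0 := cosetTopology.mem_nhds_zero_iff.2
    ⟨W, hW, fun _ hg => hUV (hWU (Set.add_subset_add_left hMW hg))⟩
  exact hMne <| cosetTopology.eq_bot_of_eq_subspace hG <|
    hmin _ (cosetTopology.subspace_le G M) cosetTopology.isTopologicalAddGroup
      (cosetTopology.t2Space hMclosed hGM) hV'

end CosetTopology

theorem addSubgroup_ne_bot_of_isOpen_of_infinite {A : Type*} [AddGroup A] [TopologicalSpace A]
    [SeparatelyContinuousAdd A] [CompactSpace A] [Infinite A] {H : AddSubgroup A}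
    (hH : IsOpen (H : Set A)) : H ≠ ⊥ := by
  rintro rfl
  have : DiscreteTopology A := discreteTopology_of_isOpen_singleton_zero hH
  exact not_finite_iff_infinite.2 ‹_› finite_of_compact_of_discrete

theorem exists_closed_addSubgroup_ne_bot_subset {K : Type*} [AddGroup K] [TopologicalSpace K]
    [IsTopologicalAddGroup K] [T2Space K] {N : AddSubgroup K} (hN : IsCompact (N : Set K))
    (hinf : (N : Set K).Infinite) [TotallyDisconnectedSpace N] {U : Set K} (hU : U ∈ 𝓝 0) :
    ∃ M ≤ N, IsClosed (M : Set K) ∧ M ≠ ⊥ ∧ (M : Set K) ⊆ U := by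
  have : CompactSpace N := isCompact_iff_compactSpace.1 hN
  have : Infinite N := hinf.to_subtype
  obtain ⟨H, hHU⟩ := ProfiniteGrp.exist_openNormalAddSubgroup_sub_open_nhds_of_zero
    (isOpen_interior.preimage (continuous_subtype_val (p := (· ∈ N))))
    (mem_interior_iff_mem_nhds.2 hU)
  have hHopen : IsOpen (H.toAddSubgroup : Set N) := H.isOpen'
  have hHclosed : IsClosed (H.toAddSubgroup : Set N) := AddSubgroup.isClosed_of_isOpen _ hHopen
  refine ⟨H.toAddSubgroup.map N.subtype, AddSubgroup.map_subtype_le _, ?_, ?_, ?_⟩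
  · exact hN.isClosed.isClosedEmbedding_subtypeVal.isClosedMap _ hHclosed
  · rw [Ne, AddSubgroup.map_eq_bot_iff_of_injective _ N.subtype_injective]
    exact addSubgroup_ne_bot_of_isOpen_of_infinite hHopen
  · rintro _ ⟨y, hy, rfl⟩
    exact interior_subset (hHU hy)

theorem addSubgroup_normal_of_le_center {A : Type*} [AddGroup A] {M : AddSubgroup A}
    (hM : M ≤ AddSubgroup.center A) : M.Normal where
  conj_mem m hm g := by rwa [AddSubgroup.mem_center_iff.1 (hM hm) g, add_neg_cancel_right]

theorem not_locallyMinimal_of_disjoint_totallyDisconnected_general {K : Type*} [AddGroup K]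
    [TopologicalSpace K] [IsTopologicalAddGroup K] [T2Space K] {G N : AddSubgroup K}
    (hG : Dense (G : Set K)) (hN : IsCompact (N : Set K)) (hcenter : N ≤ AddSubgroup.center K)
    (hinf : (N : Set K).Infinite) [TotallyDisconnectedSpace N] (hdisj : Disjoint G N) :
    ¬ LocallyMinimal G := by
  refine not_locallyMinimal_of_forall_nhds_exists_subset hG fun U hU => ?_
  obtain ⟨M, hMN, hMclosed, hMne, hMU⟩ := exists_closed_addSubgroup_ne_bot_subset hN hinf hU
  exact ⟨M, addSubgroup_normal_of_le_center (hMN.trans hcenter), hMclosed, hMne,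
    hdisj.mono_right hMN, hMU⟩

/-- Let `K` be a compact Hausdorff abelian group and `G` a dense subgroup. If there is an
infinite totally disconnected closed subgroup `N` of `K` with `G ⊓ N = {0}`, then `G` is
not locally minimal. -/
theorem not_locallyMinimal_of_disjoint_totallyDisconnected {K : Type*} [AddCommGroup K]
    [TopologicalSpace K] [IsTopologicalAddGroup K] [T2Space K] [CompactSpace K]
    (G N : AddSubgroup K) (hG : Dense (G : Set K)) (hN : IsClosed (N : Set K))
    (hinf : (N : Set K).Infinite) (htd : TotallyDisconnectedSpace ↥N)
    (hdisj : G ⊓ N = ⊥) :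
    ¬ LocallyMinimal ↥G :=
  not_locallyMinimal_of_disjoint_totallyDisconnected_general hG hN.isCompact
    (fun x _ => AddSubgroup.mem_center_iff.2 fun y => add_comm y x) hinf (disjoint_iff.2 hdisj)
end

section
/- Let K be a compact Hausdorff abelian topological group which is torsion (every element has finite order), and let G be a subgroup of K. Then G (with the subspace topology) is locally minimal if and only if G has an open subgroup which is minimal. -/
/-!
In an abelian group whose open subgroups form a neighbourhood base of `0`, local minimality with
respect to `V` passes to minimality of any open subgroup `W ⊆ V`: a coarser Hausdorff group topology
on `W` extends to one on the whole group for which `W`, hence `V`, is a neighbourhood of `0`.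

It remains to see that a compact torsion abelian group `K` has such a base. By the Baire category
theorem `K` has finite exponent `n`. If `m` translates of `V` cover `K`, then in each finite
subgroup `F` some translate of `V` has density at least `1 / m`, and Bogolyubov's Fourier-analytic
argument gives a subgroup of `F` inside `V + V - V - V` of index at most `n ^ m ^ 2`, a bound that
does not depend on `F`. Since `K` is the directed union of its finite subgroups, an ultralimit of
these subgroups has finite index in `K`; its closure is an open subgroup.
-/

open Filter Finset Topology
open scoped Pointwise

section CharacterKernels

variable {A M R : Type*} [AddCommGroup A] [CommMonoid M] [CommRing R] [IsDomain R]

/-- The annihilator of a finite set `Λ` of characters: the subgroup of elements on which every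
character in `Λ` is trivial. It plays the role of a Bohr set in Bogolyubov's argument. -/
def charAnnihilator (Λ : Finset (AddChar A M)) : AddSubgroup A :=
  ⨅ χ : Λ, χ.1.toAddMonoidHom.ker

lemma mem_charAnnihilator {Λ : Finset (AddChar A M)} {x : A} :
    x ∈ charAnnihilator Λ ↔ ∀ χ ∈ Λ, χ x = 1 := by
  simp only [charAnnihilator, AddSubgroup.mem_iInf, Subtype.forall]
  rfl

lemma index_ker_addChar_le (χ : AddChar A R) {n : ℕ} (hn : n ≠ 0)
    (hexp : ∀ x : A, n • x = 0) : χ.toAddMonoidHom.ker.index ≤ n := by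
  have : NeZero n := ⟨hn⟩
  let χunits : A →+ Additive Rˣ := χ.toMonoidHom.toHomUnits.toAdditiveRight
  have hker : χ.toAddMonoidHom.ker = χunits.ker := by
    ext x
    exact (Units.ext_iff (u := χ.toMonoidHom.toHomUnits (.ofAdd x)) (v := 1)).symm
  have hrange : (χunits.range : Set (Additive Rˣ)) ⊆ (rootsOfUnity n R).toAddSubgroup := by
    rintro _ ⟨x, rfl⟩
    change n • χunits x = 0
    rw [← map_nsmul, hexp, map_zero]
  calc χ.toAddMonoidHom.ker.index = Nat.card χunits.range := by
        rw [hker, AddSubgroup.index_ker]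
    _ ≤ Nat.card (rootsOfUnity n R) :=
        Nat.card_mono (inferInstanceAs (Finite (rootsOfUnity n R))) hrange
    _ ≤ n := card_rootsOfUnity R n

lemma index_charAnnihilator_le (Λ : Finset (AddChar A R)) {n : ℕ} (hn : n ≠ 0)
    (hexp : ∀ x : A, n • x = 0) : (charAnnihilator Λ).index ≤ n ^ #Λ :=
  calc (charAnnihilator Λ).index ≤ ∏ χ : Λ, χ.1.toAddMonoidHom.ker.index :=
        AddSubgroup.index_iInf_le _
    _ ≤ ∏ _χ : Λ, n := prod_le_prod' fun χ _ ↦ index_ker_addChar_le χ.1 hn hexp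
    _ = n ^ #Λ := by rw [prod_const, card_univ, Fintype.card_coe]

end CharacterKernels

section Bogolyubov

variable {A : Type*} [AddCommGroup A] {B : Finset A}

/-- The Fourier coefficient of the indicator function of `B` at the character `χ`. -/
def charSum (B : Finset A) (χ : AddChar A ℂ) : ℂ := ∑ b ∈ B, χ b

lemma charSum_zero (B : Finset A) : charSum B 0 = #B := by simp [charSum]

lemma sq_norm_charSum [Finite A] (B : Finset A) (χ : AddChar A ℂ) :
    (‖charSum B χ‖ : ℂ) ^ 2 = ∑ p ∈ B ×ˢ B, χ (p.1 - p.2) := by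
  rw [← Complex.mul_conj', charSum, map_sum, sum_mul_sum, ← sum_product']
  refine sum_congr rfl fun p _ ↦ ?_
  rw [sub_eq_add_neg, AddChar.map_add_eq_mul, AddChar.map_neg_eq_conj]

lemma sum_norm_charSum_pow_four_mul_eq_zero [Finite A] {h : A}
    (hh : h ∉ (B + B - B - B : Set A)) :
    ∑ χ : AddChar A ℂ, (‖charSum B χ‖ : ℂ) ^ 4 * χ h = 0 := by
  classical
  have := Fintype.ofFinite A
  have expand (χ : AddChar A ℂ) : (‖charSum B χ‖ : ℂ) ^ 4 * χ h =
      ∑ p ∈ B ×ˢ B, ∑ q ∈ B ×ˢ B, χ (p.1 - p.2 + (q.1 - q.2) + h) := by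
    rw [show 4 = 2 * 2 from rfl, pow_mul, sq_norm_charSum, sq, sum_mul_sum, sum_mul]
    simp_rw [sum_mul, AddChar.map_add_eq_mul]
  simp_rw [expand]
  rw [sum_comm]
  refine sum_eq_zero fun p hp ↦ ?_
  rw [sum_comm]
  refine sum_eq_zero fun q hq ↦ ?_
  rw [AddChar.sum_apply_eq_ite, if_neg]
  intro hsum
  rw [mem_product] at hp hq
  have hrep : h = p.2 + q.2 - p.1 - q.1 := by
    rw [← sub_eq_zero, ← hsum]
    abel
  exact hh (hrep ▸ Set.sub_mem_sub (Set.sub_mem_sub (Set.add_mem_add hp.2 hq.2) hp.1) hq.1)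

variable [Fintype A]

lemma sum_sq_norm_charSum (B : Finset A) :
    ∑ χ : AddChar A ℂ, ‖charSum B χ‖ ^ 2 = (Fintype.card A : ℝ) * #B := by
  classical
  suffices ∑ χ : AddChar A ℂ, (‖charSum B χ‖ : ℂ) ^ 2 = (Fintype.card A : ℂ) * #B by
    exact_mod_cast this
  simp_rw [sq_norm_charSum]
  rw [sum_comm]
  simp_rw [AddChar.sum_apply_eq_ite, sub_eq_zero]
  rw [sum_product]
  simp [mul_comm]

/-- The characters at which the Fourier coefficient of the indicator function of `B` is large.
With `β = #B / #A` the normalised coefficients are cut off at `β ^ (3 / 2)`, the value for which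
the remaining characters carry less than the trivial character in the fourth moment. -/
noncomputable def largeSpectrum (B : Finset A) : Finset (AddChar A ℂ) :=
  {χ | (#B : ℝ) ^ 3 ≤ Fintype.card A * ‖charSum B χ‖ ^ 2}

lemma zero_mem_largeSpectrum (B : Finset A) : 0 ∈ largeSpectrum B := by
  have hcard : (#B : ℝ) ≤ Fintype.card A := by exact_mod_cast card_le_univ B
  rw [largeSpectrum, mem_filter_univ, charSum_zero, Complex.norm_natCast, pow_succ']
  gcongr

lemma card_largeSpectrum_mul_sq_card_le (hB : B.Nonempty) :
    #(largeSpectrum B) * #B ^ 2 ≤ Fintype.card A ^ 2 := by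
  have hpos : (0 : ℝ) < #B := by exact_mod_cast hB.card_pos
  suffices (#(largeSpectrum B) * #B ^ 2 : ℝ) * #B ≤ Fintype.card A ^ 2 * #B by
    exact_mod_cast le_of_mul_le_mul_right this hpos
  calc (#(largeSpectrum B) * #B ^ 2 : ℝ) * #B
      = ∑ _χ ∈ largeSpectrum B, (#B : ℝ) ^ 3 := by rw [sum_const, nsmul_eq_mul]; ring
    _ ≤ ∑ χ ∈ largeSpectrum B, Fintype.card A * ‖charSum B χ‖ ^ 2 :=
        sum_le_sum fun χ hχ ↦ (mem_filter.1 hχ).2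
    _ ≤ ∑ χ, Fintype.card A * ‖charSum B χ‖ ^ 2 :=
        sum_le_univ_sum_of_nonneg fun χ ↦ by positivity
    _ = Fintype.card A ^ 2 * #B := by rw [← mul_sum, sum_sq_norm_charSum]; ring

lemma sum_compl_largeSpectrum_lt (hB : B.Nonempty) :
    ∑ χ ∈ (largeSpectrum B)ᶜ, ‖charSum B χ‖ ^ 4 < (#B : ℝ) ^ 4 := by
  have hpos : (0 : ℝ) < #B := by exact_mod_cast hB.card_pos
  have hcard : (0 : ℝ) < Fintype.card A := by exact_mod_cast hB.card_pos.trans_le (card_le_univ B)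
  have hzero : (#B : ℝ) ^ 2 ≤ ∑ χ ∈ largeSpectrum B, ‖charSum B χ‖ ^ 2 := by
    simpa [charSum_zero] using single_le_sum (f := fun χ ↦ ‖charSum B χ‖ ^ 2)
      (fun χ _ ↦ by positivity) (zero_mem_largeSpectrum B)
  have hcompl : ∑ χ ∈ (largeSpectrum B)ᶜ, ‖charSum B χ‖ ^ 2 < Fintype.card A * #B := by
    have := sum_add_sum_compl (largeSpectrum B) fun χ ↦ ‖charSum B χ‖ ^ 2
    rw [sum_sq_norm_charSum] at this
    linarith [pow_pos hpos 2]
  refine lt_of_mul_lt_mul_left ?_ hcard.le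
  calc (Fintype.card A : ℝ) * ∑ χ ∈ (largeSpectrum B)ᶜ, ‖charSum B χ‖ ^ 4
      = ∑ χ ∈ (largeSpectrum B)ᶜ,
          Fintype.card A * ‖charSum B χ‖ ^ 2 * ‖charSum B χ‖ ^ 2 := by
        rw [mul_sum]
        exact sum_congr rfl fun χ _ ↦ by ring
    _ ≤ ∑ χ ∈ (largeSpectrum B)ᶜ, (#B : ℝ) ^ 3 * ‖charSum B χ‖ ^ 2 := by
        refine sum_le_sum fun χ hχ ↦ mul_le_mul_of_nonneg_right ?_ (by positivity)
        rw [largeSpectrum, mem_compl, mem_filter_univ, not_le] at hχ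
        exact hχ.le
    _ < #B ^ 3 * (Fintype.card A * #B) := by
        rw [← mul_sum]
        gcongr
    _ = Fintype.card A * #B ^ 4 := by ring

lemma charAnnihilator_largeSpectrum_subset (hB : B.Nonempty) :
    (charAnnihilator (largeSpectrum B) : Set A) ⊆ B + B - B - B := by
  intro h hh
  by_contra hnot
  have hsum := sum_norm_charSum_pow_four_mul_eq_zero hnot
  rw [← sum_add_sum_compl (largeSpectrum B)] at hsum
  have hmain : ∑ χ ∈ largeSpectrum B, (‖charSum B χ‖ : ℂ) ^ 4 * χ h =
      (∑ χ ∈ largeSpectrum B, ‖charSum B χ‖ ^ 4 : ℝ) := by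
    push_cast
    exact sum_congr rfl fun χ hχ ↦ by rw [mem_charAnnihilator.1 hh χ hχ, mul_one]
  have hle : (#B : ℝ) ^ 4 ≤ ‖∑ χ ∈ largeSpectrum B, (‖charSum B χ‖ : ℂ) ^ 4 * χ h‖ := by
    rw [hmain, Complex.norm_real]
    refine le_trans ?_ (le_abs_self _)
    simpa [charSum_zero] using single_le_sum (f := fun χ ↦ ‖charSum B χ‖ ^ 4)
      (fun χ _ ↦ by positivity) (zero_mem_largeSpectrum B)
  have herr : ‖∑ χ ∈ (largeSpectrum B)ᶜ, (‖charSum B χ‖ : ℂ) ^ 4 * χ h‖ ≤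
      ∑ χ ∈ (largeSpectrum B)ᶜ, ‖charSum B χ‖ ^ 4 :=
    norm_sum_le_of_le _ fun χ _ ↦ by simp
  rw [eq_neg_of_add_eq_zero_left hsum, norm_neg] at hle
  exact (sum_compl_largeSpectrum_lt hB).not_ge (hle.trans herr)

theorem bogolyubov_finite {n m : ℕ} (hn : n ≠ 0) (hexp : ∀ x : A, n • x = 0)
    (hcard : Fintype.card A ≤ m * #B) :
    ∃ H : AddSubgroup A, H.index ≤ n ^ m ^ 2 ∧ (H : Set A) ⊆ B + B - B - B := by
  have hpos : 0 < #B := Nat.pos_of_mul_pos_left (Fintype.card_pos.trans_le hcard)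
  have hB : B.Nonempty := card_pos.1 hpos
  have hspec : #(largeSpectrum B) ≤ m ^ 2 := by
    refine Nat.le_of_mul_le_mul_right ?_ (pow_pos hpos 2)
    calc #(largeSpectrum B) * #B ^ 2 ≤ Fintype.card A ^ 2 := card_largeSpectrum_mul_sq_card_le hB
      _ ≤ (m * #B) ^ 2 := by gcongr
      _ = m ^ 2 * #B ^ 2 := mul_pow ..
  exact ⟨charAnnihilator (largeSpectrum B),
    (index_charAnnihilator_le _ hn hexp).trans (Nat.pow_le_pow_right (Nat.pos_of_ne_zero hn) hspec),
    charAnnihilator_largeSpectrum_subset hB⟩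

end Bogolyubov

section Ultralimit

variable {ι A : Type*} [AddGroup A] {𝒰 : Ultrafilter ι} {H : ι → AddSubgroup A}

/-- The limit of a family of subgroups along an ultrafilter `𝒰`: the elements that lie in
`𝒰`-almost all members of the family. It glues subgroups found inside the finite subgroups of `A`
into a single subgroup. -/
def ultralimit (𝒰 : Ultrafilter ι) (H : ι → AddSubgroup A) : AddSubgroup A where
  carrier := {x | ∀ᶠ i in 𝒰, x ∈ H i}
  zero_mem' := Eventually.of_forall fun i ↦ (H i).zero_mem
  add_mem' hx hy := by filter_upwards [hx, hy] with i using (H i).add_mem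
  neg_mem' hx := by filter_upwards [hx] with i using (H i).neg_mem

lemma mem_ultralimit {x : A} : x ∈ ultralimit 𝒰 H ↔ ∀ᶠ i in 𝒰, x ∈ H i := Iff.rfl

lemma ultralimit_subset {S : Set A} (hS : ∀ i, (H i : Set A) ⊆ S) :
    (ultralimit 𝒰 H : Set A) ⊆ S := fun _ hx ↦
  let ⟨i, hi⟩ := (mem_ultralimit.1 hx).exists
  hS i hi

lemma card_le_relIndex {H F : AddSubgroup A} {κ : Type*} (hHF : H.relIndex F ≠ 0)
    {g : κ → A} (hgF : ∀ k, g k ∈ F) (hg : ∀ k l, -g k + g l ∈ H → k = l) :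
    Nat.card κ ≤ H.relIndex F := by
  have : Finite (F ⧸ H.addSubgroupOf F) := Nat.finite_of_card_ne_zero hHF
  let toQuotient (k : κ) : F ⧸ H.addSubgroupOf F := (⟨g k, hgF k⟩ : F)
  exact Nat.card_le_card_of_injective toQuotient fun k l hkl ↦
    hg k l ((QuotientAddGroup.eq (s := H.addSubgroupOf F)).1 hkl)

lemma finiteIndex_ultralimit {F : ι → AddSubgroup A} {N : ℕ} (hF : ∀ x, ∀ᶠ i in 𝒰, x ∈ F i)
    (hfin : ∀ i, (H i).relIndex (F i) ≠ 0) (hindex : ∀ i, (H i).relIndex (F i) ≤ N) :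
    (ultralimit 𝒰 H).FiniteIndex := by
  suffices Finite (A ⧸ ultralimit 𝒰 H) from AddSubgroup.finiteIndex_of_finite_quotient
  by_contra hinf
  rw [not_finite_iff_infinite] at hinf
  obtain ⟨t, ht⟩ := Infinite.exists_subset_card_eq (A ⧸ ultralimit 𝒰 H) (N + 1)
  have hmem : ∀ᶠ i in 𝒰, ∀ q : t, q.1.out ∈ F i := eventually_all.2 fun q ↦ hF _
  have hsep : ∀ᶠ i in 𝒰, ∀ q r : t, -q.1.out + r.1.out ∈ H i → q = r := by
    refine eventually_all.2 fun q ↦ eventually_all.2 fun r ↦ ?_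
    by_cases hqr : -q.1.out + r.1.out ∈ ultralimit 𝒰 H
    · have : q = r := Subtype.ext <| by
        simpa using QuotientAddGroup.eq.2 hqr
      exact Eventually.of_forall fun _ _ ↦ this
    · filter_upwards [Ultrafilter.eventually_not.2 hqr] with i hi hi' using absurd hi' hi
  obtain ⟨i, himem, hisep⟩ := (hmem.and hsep).exists
  have hcard := (card_le_relIndex (hfin i) himem hisep).trans (hindex i)
  rw [Nat.card_eq_fintype_card, Fintype.card_coe, ht] at hcard
  exact N.lt_irrefl hcard

end Ultralimit

section CoveredByTranslates

lemma exists_card_le_mul_card_filter {α κ : Type*} [Fintype α] [Nonempty α] {t : Finset κ}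
    {P : κ → α → Prop} [∀ k, DecidablePred (P k)] (hP : ∀ a, ∃ k ∈ t, P k a) :
    ∃ k ∈ t, Fintype.card α ≤ #t * #{a | P k a} := by
  classical
  obtain ⟨k₀, hk₀, -⟩ := hP (Classical.arbitrary α)
  obtain ⟨k, hk, hmax⟩ := t.exists_max_image (fun k ↦ #{a | P k a}) ⟨k₀, hk₀⟩
  have hcover : univ = t.biUnion fun k ↦ ({a | P k a} : Finset α) := by
    ext a
    simpa using hP a
  exact ⟨k, hk, by simpa [← hcover] using card_biUnion_le_card_mul t _ _ hmax⟩

variable {A : Type*} [AddCommGroup A] {n : ℕ} {S : Set A} {t : Finset A}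

lemma exists_relIndex_le_subset_of_cover (hn : n ≠ 0) (hexp : ∀ x : A, n • x = 0)
    (ht : ∀ x, ∃ a ∈ t, a + x ∈ S) (F : AddSubgroup A) [Finite F] :
    ∃ H : AddSubgroup A, H.relIndex F ≤ n ^ #t ^ 2 ∧ (H : Set A) ⊆ S + S - S - S := by
  classical
  have := Fintype.ofFinite F
  obtain ⟨a, -, ha⟩ := exists_card_le_mul_card_filter (P := fun a (x : F) ↦ a + (x : A) ∈ S)
    fun x : F ↦ ht x
  obtain ⟨H, hindex, hH⟩ := bogolyubov_finite hn
    (fun x : F ↦ Subtype.ext (by simpa using hexp x)) ha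
  refine ⟨H.map F.subtype, ?_, ?_⟩
  · rwa [AddSubgroup.relIndex, AddSubgroup.addSubgroupOf,
      AddSubgroup.comap_map_eq_self_of_injective F.subtype_injective]
  · rintro _ ⟨x, hx, rfl⟩
    obtain ⟨_, ⟨_, ⟨b, hb, c, hc, rfl⟩, d, hd, rfl⟩, e, he, rfl⟩ := hH hx
    simp only [coe_filter, mem_univ, true_and, Set.mem_ofPred_eq] at hb hc hd he
    have htranslate : F.subtype (b + c - d - e) =
        (a + (b : A)) + (a + (c : A)) - (a + (d : A)) - (a + (e : A)) := by
      simp only [AddSubgroup.coe_subtype, AddSubgroup.coe_sub, AddSubgroup.coe_add]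
      abel
    rw [htranslate]
    exact Set.sub_mem_sub (Set.sub_mem_sub (Set.add_mem_add hb hc) hd) he

lemma finite_closure_finset (htor : IsAddTorsion A) (s : Finset A) :
    Finite (AddSubgroup.closure (s : Set A)) := by
  have : AddGroup.FG (AddSubgroup.closure (s : Set A)) :=
    (AddGroup.fg_iff_addSubgroup_fg _).2 ⟨s, rfl⟩
  exact AddCommGroup.finite_of_fg_isAddTorsion _ (htor.addSubgroup _)

theorem bogolyubov_of_cover (hexp : AddMonoid.ExponentExists A)
    (ht : ∀ x, ∃ a ∈ t, a + x ∈ S) :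
    ∃ H : AddSubgroup A, H.FiniteIndex ∧ (H : Set A) ⊆ S + S - S - S := by
  let F (s : Finset A) := AddSubgroup.closure (s : Set A)
  have hfin (s) : Finite (F s) := finite_closure_finset (fun _ ↦ hexp.isOfFinAddOrder) s
  choose H hindex hH using fun s ↦ exists_relIndex_le_subset_of_cover hexp.exponent_ne_zero
    AddMonoid.exponent_nsmul_eq_zero ht (F s)
  let 𝒰 : Ultrafilter (Finset A) := Ultrafilter.of atTop
  have hF (x : A) : ∀ᶠ s in 𝒰, x ∈ F s := by
    refine Ultrafilter.of_le atTop ?_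
    filter_upwards [eventually_ge_atTop {x}] with s hs
    exact AddSubgroup.subset_closure (hs (mem_singleton_self x))
  have hrel (s) : (H s).relIndex (F s) ≠ 0 := AddSubgroup.FiniteIndex.index_ne_zero
  exact ⟨ultralimit 𝒰 H, finiteIndex_ultralimit hF hrel hindex, ultralimit_subset hH⟩

end CoveredByTranslates

section CompactTorsion

variable {K : Type*} [AddCommGroup K] [TopologicalSpace K] [IsTopologicalAddGroup K]

theorem exponentExists_of_isAddTorsion [CompactSpace K] [T2Space K] (htor : IsAddTorsion K) :
    AddMonoid.ExponentExists K := by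
  let T (n : ℕ) : AddSubgroup K := (nsmulAddMonoidHom (α := K) (n + 1)).ker
  have hclosed (n) : IsClosed (T n : Set K) :=
    isClosed_singleton.preimage (continuous_nsmul (n + 1))
  have hcover : ⋃ n, (T n : Set K) = Set.univ := Set.eq_univ_of_forall fun x ↦ by
    obtain ⟨k, hk, hkx⟩ := isOfFinAddOrder_iff_nsmul_eq_zero.1 (htor x)
    obtain ⟨m, rfl⟩ := Nat.exists_eq_succ_of_ne_zero hk.ne'
    exact Set.mem_iUnion.2 ⟨m, hkx⟩
  obtain ⟨n, x, hx⟩ := nonempty_interior_of_iUnion_of_closed hclosed hcover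
  have hopen : IsOpen (T n : Set K) := (T n).isOpen_of_mem_nhds (mem_interior_iff_mem_nhds.1 hx)
  have : Finite (K ⧸ T n) := (T n).quotient_finite_of_isOpen hopen
  have : (T n).FiniteIndex := AddSubgroup.finiteIndex_of_finite_quotient
  have hindex : 0 < (T n).index := Nat.pos_of_ne_zero AddSubgroup.FiniteIndex.index_ne_zero
  refine ⟨(n + 1) * (T n).index, Nat.mul_pos n.succ_pos hindex, fun x ↦ ?_⟩
  rw [mul_nsmul']
  exact (T n).nsmul_index_mem x

lemma exists_nhds_zero_add_sub_sub_subset {U : Set K} (hU : U ∈ 𝓝 0) :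
    ∃ V ∈ 𝓝 (0 : K), V + V - V - V ⊆ U := by
  obtain ⟨W, hW, hWU⟩ := exists_nhds_half_neg hU
  obtain ⟨V, hV, hVW⟩ := exists_nhds_half_neg hW
  refine ⟨V, hV, ?_⟩
  rintro _ ⟨_, ⟨_, ⟨a, ha, b, hb, rfl⟩, c, hc, rfl⟩, d, hd, rfl⟩
  have hregroup : a + b - c - d = (a - c) - (d - b) := by abel
  change a + b - c - d ∈ U
  exact hregroup ▸ hWU _ (hVW a ha c hc) _ (hVW d hd b hb)

theorem nonarchimedeanAddGroup_of_exponentExists [CompactSpace K]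
    (hexp : AddMonoid.ExponentExists K) : NonarchimedeanAddGroup K where
  is_nonarchimedean U hU := by
    obtain ⟨C, hC, hCclosed, hCU⟩ := exists_mem_nhds_isClosed_subset hU
    obtain ⟨V, hV, hVC⟩ := exists_nhds_zero_add_sub_sub_subset hC
    obtain ⟨t, ht⟩ := compact_covered_by_add_left_translates (isCompact_univ (X := K))
      (V := V) ⟨0, mem_interior_iff_mem_nhds.2 hV⟩
    obtain ⟨H, hindex, hHV⟩ := bogolyubov_of_cover (t := t) (S := V) hexp fun x ↦ by
      simpa using ht (Set.mem_univ x)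
    have : H.topologicalClosure.FiniteIndex :=
      AddSubgroup.finiteIndex_of_le H.le_topologicalClosure
    exact ⟨⟨H.topologicalClosure, H.topologicalClosure.isOpen_of_isClosed_of_finiteIndex
      H.isClosed_topologicalClosure⟩,
      (closure_minimal (hHV.trans hVC) hCclosed).trans hCU⟩

end CompactTorsion

section GroupTopology

lemma map_subtype_nhds_zero {G : Type*} [AddGroup G] [TopologicalSpace G] {W : AddSubgroup G}
    (hW : (W : Set G) ∈ 𝓝 0) : map W.subtype (𝓝 0) = 𝓝 0 :=
  map_nhds_subtype_coe_eq_nhds W.zero_mem hW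

lemma addGroupTopology_le_of_nhds_zero_le {G : Type*} [AddGroup G] {t t' : TopologicalSpace G}
    (ht : @IsTopologicalAddGroup G t _) (ht' : @IsTopologicalAddGroup G t' _)
    (h : @nhds G t 0 ≤ @nhds G t' 0) : t ≤ t' :=
  continuous_id_iff_le.1 <|
    @continuous_of_tendsto_nhds_zero G t _ ht G _ _ t' ht'.toContinuousAdd _ _ (AddMonoidHom.id G) h

lemma exists_addGroupTopology_nhds_zero_eq_map {G : Type*} [AddCommGroup G] (W : AddSubgroup G)
    {σ : TopologicalSpace W} (hσ : @IsTopologicalAddGroup W σ _) :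
    ∃ t : TopologicalSpace G, @IsTopologicalAddGroup G t _ ∧
      @nhds G t 0 = map W.subtype (@nhds W σ 0) := by
  let B : AddGroupFilterBasis G := addGroupFilterBasisOfComm (map W.subtype (@nhds W σ 0)).sets
    ⟨_, univ_mem⟩ (fun S T hS hT ↦ ⟨S ∩ T, inter_mem hS hT, subset_rfl⟩)
    (fun S hS ↦ @mem_of_mem_nhds W σ 0 (W.subtype ⁻¹' S) hS)
    (fun S hS ↦ by
      obtain ⟨T, hT, hTS⟩ := @exists_nhds_zero_half W σ _ _ _ hS
      refine ⟨W.subtype '' T, image_mem_map hT, ?_⟩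
      rintro _ ⟨_, ⟨x, hx, rfl⟩, _, ⟨y, hy, rfl⟩, rfl⟩
      exact hTS x hx y hy)
    (fun S hS ↦ ⟨-S, (@continuous_neg W σ _ _).tendsto' 0 0 neg_zero hS, subset_rfl⟩)
  refine ⟨B.topology, B.isTopologicalAddGroup, B.nhds_zero_eq.trans ?_⟩
  ext S
  exact B.mem_filter_iff.trans
    ⟨fun ⟨T, hT, hTS⟩ ↦ mem_of_superset hT hTS, fun hS ↦ ⟨S, hS, subset_rfl⟩⟩

lemma t2Space_of_nhds_zero_eq_map {G : Type*} [AddGroup G] [TopologicalSpace G]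
    [IsTopologicalAddGroup G] {W : AddSubgroup G} {σ : TopologicalSpace W} (hσ : @T1Space W σ)
    (h : 𝓝 (0 : G) = map W.subtype (@nhds W σ 0)) : T2Space G := by
  refine IsTopologicalAddGroup.t2Space_of_zero_sep fun x hx ↦ ?_
  rw [h]
  refine ⟨{x}ᶜ, ?_, fun hxx ↦ hxx rfl⟩
  have hclosed : @IsClosed W σ (W.subtype ⁻¹' {x}) :=
    (Set.subsingleton_singleton.preimage W.subtype_injective).isClosed
  exact (@IsClosed.isOpen_compl W σ _ hclosed).mem_nhds fun h0 ↦ hx h0.symm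

instance nonarchimedeanAddGroup_addSubgroup {K : Type*} [AddGroup K] [TopologicalSpace K]
    [NonarchimedeanAddGroup K] (G : AddSubgroup K) : NonarchimedeanAddGroup G where
  is_nonarchimedean U hU := by
    obtain ⟨U', hU', hUU'⟩ := mem_nhds_induced _ _ _ |>.1 hU
    obtain ⟨L, hL⟩ := NonarchimedeanAddGroup.is_nonarchimedean U' hU'
    exact ⟨L.comap G.subtype continuous_subtype_val, (Set.preimage_mono hL).trans hUU'⟩

end GroupTopology

section LocalMinimality

theorem isMinimal_of_isOpen_of_subset {G : Type*} [AddCommGroup G] [τ : TopologicalSpace G]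
    [hG : IsTopologicalAddGroup G] {V : Set G}
    (hV : ∀ σ : TopologicalSpace G, τ ≤ σ → @IsTopologicalAddGroup G σ _ → @T2Space G σ →
      V ∈ @nhds G σ 0 → σ = τ)
    {W : AddSubgroup G} (hW : IsOpen (W : Set G)) (hWV : (W : Set G) ⊆ V) : IsMinimal W := by
  have hτ : map W.subtype (𝓝 0) = 𝓝 (0 : G) := map_subtype_nhds_zero (hW.mem_nhds W.zero_mem)
  have hgroupτ : IsTopologicalAddGroup W := inferInstance
  intro σ hle hgroup hT2
  obtain ⟨t, ht, hnhds⟩ := exists_addGroupTopology_nhds_zero_eq_map W hgroup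
  have hτt : τ ≤ t := by
    refine addGroupTopology_le_of_nhds_zero_le hG ht ?_
    rw [hnhds, ← hτ]
    exact map_mono (nhds_mono hle)
  have htT2 : @T2Space G t := @t2Space_of_nhds_zero_eq_map G _ t ht W σ inferInstance hnhds
  have hVt : V ∈ @nhds G t 0 := by
    rw [hnhds]
    exact univ_mem' (f := @nhds W σ 0) fun x ↦ hWV x.2
  have htτ : t = τ := hV t hτt ht htT2 hVt
  rw [htτ, ← hτ] at hnhds
  exact IsTopologicalAddGroup.ext hgroup hgroupτ (map_injective W.subtype_injective hnhds.symm)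

theorem locallyMinimal_of_isOpen_of_isMinimal {G : Type*} [AddGroup G] [τ : TopologicalSpace G]
    [hG : IsTopologicalAddGroup G] {W : AddSubgroup G} (hW : IsOpen (W : Set G))
    (hmin : IsMinimal W) : LocallyMinimal G := by
  have hτ : map W.subtype (𝓝 0) = 𝓝 (0 : G) := map_subtype_nhds_zero (hW.mem_nhds W.zero_mem)
  refine ⟨W, hW.mem_nhds W.zero_mem, fun σ hle hgroup hT2 hWσ ↦ ?_⟩
  have hrestrict : σ.induced W.subtype = τ.induced W.subtype :=
    hmin _ (induced_mono hle) (topologicalAddGroup_induced W.subtype)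
      (@T2Space.of_injective_continuous _ _ (_) _ _ _ W.subtype_injective continuous_induced_dom)
  refine IsTopologicalAddGroup.ext hgroup hG ?_
  calc @nhds G σ 0 = map W.subtype (@nhds W (σ.induced W.subtype) 0) :=
        (@map_subtype_nhds_zero G _ σ W hWσ).symm
    _ = map W.subtype (@nhds W (τ.induced W.subtype) 0) := by rw [hrestrict]
    _ = @nhds G τ 0 := hτ

theorem locallyMinimal_iff_exists_isOpen_isMinimal {G : Type*} [AddCommGroup G]
    [TopologicalSpace G] [NonarchimedeanAddGroup G] :
    LocallyMinimal G ↔ ∃ W : AddSubgroup G, IsOpen (W : Set G) ∧ IsMinimal W := by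
  constructor
  · rintro ⟨V, hV, hmin⟩
    obtain ⟨W, hWV⟩ := NonarchimedeanAddGroup.is_nonarchimedean V hV
    exact ⟨W, W.isOpen, isMinimal_of_isOpen_of_subset hmin W.isOpen hWV⟩
  · rintro ⟨W, hW, hmin⟩
    exact locallyMinimal_of_isOpen_of_isMinimal hW hmin

end LocalMinimality

/-- Let `K` be a torsion compact Hausdorff abelian group and `G` a subgroup of `K`. Then
`G` is locally minimal iff `G` has an open minimal subgroup. -/
theorem subgroup_of_torsion_compact_locallyMinimal_iff {K : Type*} [AddCommGroup K]
    [TopologicalSpace K] [IsTopologicalAddGroup K] [T2Space K] [CompactSpace K]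
    (htor : ∀ x : K, IsOfFinAddOrder x) (G : AddSubgroup K) :
    LocallyMinimal ↥G ↔
      ∃ W : AddSubgroup ↥G, IsOpen (W : Set ↥G) ∧ IsMinimal ↥W := by
  have : NonarchimedeanAddGroup K :=
    nonarchimedeanAddGroup_of_exponentExists (exponentExists_of_isAddTorsion htor)
  exact locallyMinimal_iff_exists_isOpen_isMinimal
end

section
/- Let p be a prime, let K be a compact Hausdorff abelian topological group containing a closed subgroup N topologically isomorphic to the group ℤ_p of p-adic integers, and let G be a dense locally minimal subgroup of K. Then G ∩ N ≠ {0}; in particular, G contains an element of infinite order. -/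
/-!
If a closed normal subgroup `M` of `K` meets `G` trivially, then `G` embeds algebraically in `K ⧸ M`
and inherits a coarser Hausdorff group topology. When `M` is small enough, local minimality forces
this topology to be the original one, and density of `G` then gives `M = ⊥`. A compact torsion-free
nonarchimedean abelian group `A`, such as `ℤ_[p]`, has arbitrarily small nontrivial closed subgroups
`n • A`, because `n • A` lies in every open subgroup of index `n`; hence `G` must meet every normal
copy of `A` in `K`.
-/

open Filter Function Topology

theorem eq_of_dense_of_isInducing_domRestrict {X Y : Type*} [TopologicalSpace X] [T2Space X]
    [TopologicalSpace Y] {f : X → Y} (hf : Continuous f) {s : Set X} (hs : Dense s)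
    (hind : IsInducing (s.domRestrict f)) {x y : X} (hy : y ∈ s) (hxy : f x = f y) : x = y := by
  have : (comap ((↑) : s → X) (𝓝 x)).NeBot := mem_closure_iff_comap_neBot.1 (hs x)
  have tendsto_x : Tendsto ((↑) : s → X) (comap (↑) (𝓝 x)) (𝓝 x) := tendsto_comap
  have tendsto_y : Tendsto id (comap ((↑) : s → X) (𝓝 x)) (𝓝 (⟨y, hy⟩ : s)) := by
    rw [hind.tendsto_nhds_iff, Set.domRestrict_apply, ← hxy]
    exact (hf.tendsto x).comp tendsto_x
  exact tendsto_nhds_unique tendsto_x ((continuous_subtype_val.tendsto _).comp tendsto_y)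

theorem exists_nhds_zero_forall_mem_comap_quotientMk {K : Type*} [AddGroup K] [TopologicalSpace K]
    [ContinuousAdd K] {U : Set K} (hU : U ∈ 𝓝 0) :
    ∃ W ∈ 𝓝 (0 : K), ∀ M : AddSubgroup K, (M : Set K) ⊆ W →
      U ∈ comap (QuotientAddGroup.mk : K → K ⧸ M) (𝓝 ↑(0 : K)) := by
  obtain ⟨W, hW, hWU⟩ := exists_nhds_zero_half hU
  refine ⟨W, hW, fun M hMW ↦ ⟨_, QuotientAddGroup.isOpenMap_coe.image_mem_nhds hW, ?_⟩⟩
  rw [QuotientAddGroup.preimage_image_mk_eq_add]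
  exact Set.add_subset_iff.2 fun w hw m hm ↦ hWU w hw m (hMW hm)

theorem normal_range_comp_nsmulAddMonoidHom {A K : Type*} [AddCommGroup A] [AddGroup K]
    (f : A →+ K) [f.range.Normal] (n : ℕ) : (f.comp (nsmulAddMonoidHom n)).range.Normal := by
  constructor
  rintro _ ⟨a, rfl⟩ g
  obtain ⟨b, hb⟩ : g + f a + -g ∈ f.range :=
    AddSubgroup.Normal.conj_mem inferInstance _ (AddMonoidHom.mem_range.2 ⟨a, rfl⟩) g
  exact ⟨b, by simp [hb, addConj_nsmul]⟩

theorem exists_forall_nsmul_mem_of_mem_nhds_zero {A : Type*} [AddCommGroup A] [TopologicalSpace A]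
    [NonarchimedeanAddGroup A] [CompactSpace A] {U : Set A} (hU : U ∈ 𝓝 0) :
    ∃ n ≠ 0, ∀ a : A, n • a ∈ U := by
  obtain ⟨H, hHU⟩ := NonarchimedeanAddGroup.is_nonarchimedean U hU
  have : Finite (A ⧸ H.toAddSubgroup) := AddSubgroup.quotient_finite_of_isOpen _ H.isOpen
  exact ⟨H.toAddSubgroup.index, AddSubgroup.index_ne_zero_of_finite,
    fun a ↦ hHU (H.toAddSubgroup.nsmul_index_mem a)⟩

namespace LocallyMinimal

universe v

theorem exists_nhds_forall_isInducing {G : Type*} [AddGroup G] [TopologicalSpace G]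
    (hG : LocallyMinimal G) :
    ∃ V ∈ 𝓝 (0 : G), ∀ {H : Type v} [AddGroup H] [TopologicalSpace H] [IsTopologicalAddGroup H]
      [T2Space H] (f : G →+ H), Continuous f → Injective f → V ∈ comap f (𝓝 0) →
      IsInducing f := by
  obtain ⟨V, hV, hmin⟩ := hG
  refine ⟨V, hV, fun {H} _ _ _ _ f hf hinj hVf ↦ ⟨?_⟩⟩
  let σ : TopologicalSpace G := .induced f inferInstance
  have hσ : @T2Space G σ := @T2Space.of_injective_continuous _ _ σ _ _ _ hinj continuous_induced_dom
  refine (hmin σ hf.le_induced (topologicalAddGroup_induced f) hσ ?_).symm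
  rwa [nhds_induced, map_zero]

variable {K : Type*} [AddGroup K] [TopologicalSpace K] [IsTopologicalAddGroup K] [T2Space K]
  {G : AddSubgroup K}

theorem exists_nhds_forall_eq_bot_of_disjoint (hmin : LocallyMinimal G) (hG : Dense (G : Set K)) :
    ∃ W ∈ 𝓝 (0 : K), ∀ M : AddSubgroup K, M.Normal → IsClosed (M : Set K) → (M : Set K) ⊆ W →
      Disjoint G M → M = ⊥ := by
  obtain ⟨V, hV, hmin⟩ := hmin.exists_nhds_forall_isInducing
  obtain ⟨U, hU, hUV⟩ := mem_nhds_subtype _ _ _ |>.1 hV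
  obtain ⟨W, hW, hWU⟩ := exists_nhds_zero_forall_mem_comap_quotientMk hU
  refine ⟨W, hW, fun M _ hM hMW hGM ↦ ?_⟩
  let q : G →+ K ⧸ M := (QuotientAddGroup.mk' M).comp G.subtype
  have hq : Continuous q := QuotientAddGroup.continuous_mk.comp continuous_subtype_val
  have hq_inj : Injective q := by
    refine (injective_iff_map_eq_zero q).2 fun g hg ↦ Subtype.ext ?_
    exact AddSubgroup.disjoint_def.1 hGM g.2 ((QuotientAddGroup.eq_zero_iff _).1 hg)
  have hVq : V ∈ comap q (𝓝 0) := by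
    obtain ⟨T, hT, hTU⟩ := hWU M hMW
    exact ⟨T, hT, fun g hg ↦ hUV (hTU hg)⟩
  have hq_ind : IsInducing q := hmin q hq hq_inj hVq
  refine (AddSubgroup.eq_bot_iff_forall M).2 fun x hx ↦ ?_
  exact eq_of_dense_of_isInducing_domRestrict QuotientAddGroup.continuous_mk hG hq_ind G.zero_mem
    ((QuotientAddGroup.eq_zero_iff x).2 hx)

theorem inf_range_ne_bot {A : Type*} [AddCommGroup A] [TopologicalSpace A]
    [NonarchimedeanAddGroup A] [CompactSpace A] [IsAddTorsionFree A] [Nontrivial A]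
    {f : A →+ K} [f.range.Normal] (hf : Continuous f) (hf_inj : Injective f)
    (hmin : LocallyMinimal G) (hG : Dense (G : Set K)) : G ⊓ f.range ≠ ⊥ := by
  intro hbot
  obtain ⟨W, hW, hW_bot⟩ := hmin.exists_nhds_forall_eq_bot_of_disjoint hG
  obtain ⟨n, hn, hnW⟩ : ∃ n ≠ 0, ∀ a, n • a ∈ f ⁻¹' W :=
    exists_forall_nsmul_mem_of_mem_nhds_zero (hf.continuousAt (by rwa [map_zero]))
  let φ : A →+ K := f.comp (nsmulAddMonoidHom n)
  have hφ_inj : Injective φ := hf_inj.comp (nsmul_right_injective hn)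
  have hφ_closed : IsClosed (φ.range : Set K) :=
    (isCompact_range (hf.comp (continuous_nsmul n))).isClosed
  have hφ_disj : Disjoint G φ.range :=
    (disjoint_iff.2 hbot).mono_right <|
      (AddMonoidHom.range_comp f _).trans_le (AddSubgroup.map_le_range f _)
  have hφ_zero : φ = 0 := AddMonoidHom.range_eq_bot_iff.1 <|
    hW_bot φ.range (normal_range_comp_nsmulAddMonoidHom f n) hφ_closed
      (Set.range_subset_iff.2 hnW) hφ_disj
  obtain ⟨a, ha⟩ := exists_ne (0 : A)
  exact ha (hφ_inj (by simp [hφ_zero]))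

end LocallyMinimal

theorem inter_padic_ne_bot_of_locallyMinimal_general {K A : Type*} [AddGroup K]
    [TopologicalSpace K] [IsTopologicalAddGroup K] [T2Space K]
    [AddCommGroup A] [TopologicalSpace A] [NonarchimedeanAddGroup A] [CompactSpace A]
    [IsAddTorsionFree A] [Nontrivial A] {f : A →+ K} [f.range.Normal] (hf : Continuous f)
    (hf_inj : Injective f) {G : AddSubgroup K} (hG : Dense (G : Set K))
    (hmin : LocallyMinimal G) :
    G ⊓ f.range ≠ ⊥ ∧ ∃ x ∈ G, ¬ IsOfFinAddOrder x := by
  have hne : G ⊓ f.range ≠ ⊥ := hmin.inf_range_ne_bot hf hf_inj hG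
  obtain ⟨_, ⟨hxG, a, rfl⟩, hx⟩ := (AddSubgroup.bot_or_exists_ne_zero _).resolve_left hne
  refine ⟨hne, f a, hxG, ?_⟩
  rw [hf_inj.isOfFinAddOrder_iff, isOfFinAddOrder_iff_eq_zero]
  exact fun ha ↦ hx (by rw [ha, map_zero])

/-- Let `p` be a prime, `K` a compact Hausdorff abelian group containing a closed
subgroup `N` topologically isomorphic to the `p`-adic integers `ℤ_p`, and `G` a dense
locally minimal subgroup of `K`. Then `G ⊓ N ≠ {0}`; in particular, `G` contains an
element of infinite order. -/
theorem inter_padic_ne_bot_of_locallyMinimal {K : Type*} [AddCommGroup K]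
    [TopologicalSpace K] [IsTopologicalAddGroup K] [T2Space K] [CompactSpace K]
    (p : ℕ) [Fact p.Prime] (N : AddSubgroup K) (hN : IsClosed (N : Set K))
    (e : ↥N ≃+ ℤ_[p]) (he : Continuous e) (he' : Continuous e.symm)
    (G : AddSubgroup K) (hG : Dense (G : Set K)) (hmin : LocallyMinimal ↥G) :
    G ⊓ N ≠ ⊥ ∧ ∃ x ∈ G, ¬ IsOfFinAddOrder x := by
  have hrange : (N.subtype.comp e.symm.toAddMonoidHom).range = N := by
    simp [AddMonoidHom.range_comp, ← AddMonoidHom.range_eq_map]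
  exact hrange ▸ inter_padic_ne_bot_of_locallyMinimal_general (continuous_subtype_val.comp he')
    (Subtype.val_injective.comp e.symm.injective) hG hmin
end
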